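/- arXiv:2403.09123 — 2 statements merged into one kernel-verified Lean document; each statement's English description precedes it below -/
import Mathlib

section
/- Fix β ∈ (0,1). Let B ⊆ {2,…,K} be nonempty, J ⊆ (0,∞) an open interval, and N_a : J → (0,∞) for a ∈ [K] differentiable functions such that for all N ∈ J: Σ_{a∈[K]} N_a(N) = N; N_1(N) = β·N; N_a is constant on J (with value N_a^0) for every a ∈ B̄^c; and W_a(N_1(N), N_a(N)) takes a common value I_B(N) for all a ∈ B. Then for all N ∈ J: (1) N_1'(N) = β and, for every b ∈ B, N_b'(N) = (((1−β)·N − Σ_{a∈B} N_a)·d_B + N_b·d_{b,b}) / (N·d_{b,b}); (2) I_B'(N) = (1 − β − (Σ_{a∈B} N_a)/N)·d_B + I_B(N)/N; (3) there exists a constant c > 0, depending only on μ and β and not on N, such that I_B'(N) ≥ c, while for every a ∈ B̄^c the index I_a(N) = W_a(N_1(N), N_a^0) satisfies I_a(N) ≤ N_a^0·d(μ_a, μ_1). -/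
open scoped BigOperators

/-- A single-parameter exponential family, given by the log-partition function `b`,
smooth with positive second derivative on an open interval `Θ`, together with the
inverse `θof` of `b'` on the set of means `S = b'(Θ)`. -/
structure SPEF where
  Θ : Set ℝ
  Θ_isOpen : IsOpen Θ
  Θ_ordConnected : Set.OrdConnected Θ
  Θ_nonempty : Θ.Nonempty
  b : ℝ → ℝ
  b_smooth : ContDiffOn ℝ (⊤ : ℕ∞) b Θ
  b_conv : ∀ t ∈ Θ, 0 < iteratedDeriv 2 b t
  θof : ℝ → ℝ
  θof_mem : ∀ μ ∈ deriv b '' Θ, θof μ ∈ Θ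
  θof_spec : ∀ μ ∈ deriv b '' Θ, deriv b (θof μ) = μ

namespace SPEF

/-- The set of means of the family. -/
def S (F : SPEF) : Set ℝ := deriv F.b '' F.Θ

/-- KL divergence `d(μ, x)` between the members of the family with means `μ` and `x`. -/
noncomputable def d (F : SPEF) (μ x : ℝ) : ℝ :=
  (F.θof μ - F.θof x) * μ - F.b (F.θof μ) + F.b (F.θof x)

end SPEF

/-- A `K`-armed bandit instance with arm distributions in a fixed SPEF; arm `0`
(the paper's arm `1`) is the unique best arm. -/
structure Bandit (K : ℕ) [NeZero K] extends SPEF where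
  two_le : 2 ≤ K
  μ : Fin K → ℝ
  μ_mem : ∀ a, μ a ∈ SPEF.S toSPEF
  μ_best : ∀ a : Fin K, a ≠ 0 → μ a < μ 0

namespace Bandit

variable {K : ℕ} [NeZero K]

/-- KL divergence of the underlying family. -/
noncomputable def d (M : Bandit K) : ℝ → ℝ → ℝ := M.toSPEF.d

/-- The weighted mean `x_{1,a}(N₁, N_a)`. -/
noncomputable def x1 (M : Bandit K) (a : Fin K) (N1 Na : ℝ) : ℝ :=
  (N1 * M.μ 0 + Na * M.μ a) / (N1 + Na)

/-- The index `W_a(N₁, N_a)` of an arm `a ≠ 1`. -/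
noncomputable def W (M : Bandit K) (a : Fin K) (N1 Na : ℝ) : ℝ :=
  N1 * M.d (M.μ 0) (M.x1 a N1 Na) + Na * M.d (M.μ a) (M.x1 a N1 Na)

/-- The set `{2, …, K}` of suboptimal arms. -/
def alt (K : ℕ) [NeZero K] : Finset (Fin K) := Finset.univ.filter (fun a => a ≠ 0)

/-- The anchor function `g(μ, N)`. -/
noncomputable def g (M : Bandit K) (Nv : Fin K → ℝ) : ℝ :=
  (∑ a ∈ alt K, M.d (M.μ 0) (M.x1 a (Nv 0) (Nv a)) / M.d (M.μ a) (M.x1 a (Nv 0) (Nv a))) - 1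

end Bandit

open Bandit

/-- The quantity `d_B = (Σ_{a∈B} d(μ_a, x_{1,a})⁻¹)⁻¹`. -/
noncomputable def Bandit.dB {K : ℕ} [NeZero K] (M : Bandit K) (B : Finset (Fin K))
    (Nv : Fin K → ℝ) : ℝ :=
  (∑ a ∈ B, (M.d (M.μ a) (M.x1 a (Nv 0) (Nv a)))⁻¹)⁻¹

namespace SPEF

variable (F : SPEF)

lemma hasDerivAt_b {t : ℝ} (ht : t ∈ F.Θ) : HasDerivAt F.b (deriv F.b t) t :=
  ((F.b_smooth.contDiffAt (F.Θ_isOpen.mem_nhds ht)).differentiableAt (by simp)).hasDerivAt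

lemma hasStrictDerivAt_deriv_b {t : ℝ} (ht : t ∈ F.Θ) :
    HasStrictDerivAt (deriv F.b) (iteratedDeriv 2 F.b t) t := by
  have h1 : ContDiffAt ℝ 1 (deriv F.b) t :=
    ((contDiffOn_infty_iff_deriv_of_isOpen F.Θ_isOpen).1 F.b_smooth).2.contDiffAt
      (F.Θ_isOpen.mem_nhds ht) |>.of_le (by exact_mod_cast le_top)
  have h2 := h1.hasStrictDerivAt (by simp)
  rwa [iteratedDeriv_succ, iteratedDeriv_one]

lemma strictMonoOn_deriv_b : StrictMonoOn (deriv F.b) F.Θ := by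
  refine strictMonoOn_of_deriv_pos F.Θ_ordConnected.convex
    (fun t ht => (F.hasStrictDerivAt_deriv_b ht).hasDerivAt.continuousAt.continuousWithinAt)
    fun t ht => ?_
  have ht := interior_subset ht
  rw [(F.hasStrictDerivAt_deriv_b ht).hasDerivAt.deriv]
  exact F.b_conv t ht

lemma θof_deriv_b {t : ℝ} (ht : t ∈ F.Θ) : F.θof (deriv F.b t) = t :=
  F.strictMonoOn_deriv_b.injOn (F.θof_mem _ ⟨t, ht, rfl⟩) ht (F.θof_spec _ ⟨t, ht, rfl⟩)

lemma S_ordConnected : F.S.OrdConnected :=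
  (F.Θ_ordConnected.isPreconnected.image _ fun _ ht =>
    (F.hasStrictDerivAt_deriv_b ht).hasDerivAt.continuousAt.continuousWithinAt).ordConnected

lemma exists_hasDerivAt_θof {x : ℝ} (hx : x ∈ F.S) :
    ∃ r, 0 < r ∧ HasDerivAt F.θof r x := by
  obtain ⟨t, ht, rfl⟩ := hx
  refine ⟨(iteratedDeriv 2 F.b t)⁻¹, inv_pos.2 (F.b_conv t ht), ?_⟩
  refine ((F.hasStrictDerivAt_deriv_b ht).to_local_left_inverse (F.b_conv t ht).ne' ?_).hasDerivAt
  filter_upwards [F.Θ_isOpen.mem_nhds ht] with s hs using F.θof_deriv_b hs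

/-- The derivative of the divergence in its second argument is `r * (x - μ)`, with a factor
`r > 0` that does not depend on `μ`. -/
lemma exists_hasDerivAt_d {x : ℝ} (hx : x ∈ F.S) :
    ∃ r, 0 < r ∧ ∀ μ, HasDerivAt (F.d μ) (r * (x - μ)) x := by
  obtain ⟨r, hr, h⟩ := F.exists_hasDerivAt_θof hx
  refine ⟨r, hr, fun μ => ?_⟩
  have hb := F.hasDerivAt_b (F.θof_mem x hx)
  rw [F.θof_spec x hx] at hb
  have := (((h.const_sub (F.θof μ)).mul_const μ).sub_const (F.b (F.θof μ))).add (hb.comp x h)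
  exact this.congr_deriv (by ring)

lemma d_self (μ : ℝ) : F.d μ μ = 0 := by simp [d]

lemma strictMonoOn_d (μ : ℝ) : StrictMonoOn (F.d μ) (F.S ∩ Set.Ici μ) := by
  refine strictMonoOn_of_deriv_pos (F.S_ordConnected.convex.inter (convex_Ici μ))
    (fun x hx => ?_) fun x hx => ?_
  · obtain ⟨r, -, h⟩ := F.exists_hasDerivAt_d hx.1
    exact (h μ).continuousAt.continuousWithinAt
  · rw [interior_inter, interior_Ici] at hx
    obtain ⟨r, hr, h⟩ := F.exists_hasDerivAt_d (interior_subset hx.1)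
    rw [(h μ).deriv]
    exact mul_pos hr (sub_pos.2 hx.2)

lemma strictAntiOn_d (μ : ℝ) : StrictAntiOn (F.d μ) (F.S ∩ Set.Iic μ) := by
  refine strictAntiOn_of_deriv_neg (F.S_ordConnected.convex.inter (convex_Iic μ))
    (fun x hx => ?_) fun x hx => ?_
  · obtain ⟨r, -, h⟩ := F.exists_hasDerivAt_d hx.1
    exact (h μ).continuousAt.continuousWithinAt
  · rw [interior_inter, interior_Iic] at hx
    obtain ⟨r, hr, h⟩ := F.exists_hasDerivAt_d (interior_subset hx.1)
    rw [(h μ).deriv]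
    exact mul_neg_of_pos_of_neg hr (sub_neg.2 hx.2)

lemma d_pos_of_lt {μ x : ℝ} (hμ : μ ∈ F.S) (hx : x ∈ F.S) (h : μ < x) : 0 < F.d μ x :=
  (F.d_self μ).symm.trans_lt (F.strictMonoOn_d μ ⟨hμ, Set.self_mem_Ici⟩ ⟨hx, h.le⟩ h)

lemma d_nonneg {μ x : ℝ} (hμ : μ ∈ F.S) (hx : x ∈ F.S) : 0 ≤ F.d μ x := by
  rcases le_total μ x with h | h
  · exact (F.d_self μ).symm.trans_le
      ((F.strictMonoOn_d μ).monotoneOn ⟨hμ, Set.self_mem_Ici⟩ ⟨hx, h⟩ h)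
  · exact (F.d_self μ).symm.trans_le
      ((F.strictAntiOn_d μ).antitoneOn ⟨hx, h⟩ ⟨hμ, Set.self_mem_Iic⟩ h)

end SPEF

namespace Bandit

variable {K : ℕ} [NeZero K] (M : Bandit K)

lemma x1_mem_Ioo {a : Fin K} (ha : a ≠ 0) {N1 Na : ℝ} (h1 : 0 < N1) (h2 : 0 < Na) :
    M.x1 a N1 Na ∈ Set.Ioo (M.μ a) (M.μ 0) := by
  have := M.μ_best a ha
  constructor
  · rw [x1, lt_div_iff₀ (by positivity)]; nlinarith
  · rw [x1, div_lt_iff₀ (by positivity)]; nlinarith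

lemma mem_S_of_mem_Icc {a : Fin K} {x : ℝ} (hx : x ∈ Set.Icc (M.μ a) (M.μ 0)) :
    x ∈ M.toSPEF.S :=
  M.S_ordConnected.out (M.μ_mem a) (M.μ_mem 0) hx

lemma x1_mem_S {a : Fin K} (ha : a ≠ 0) {N1 Na : ℝ} (h1 : 0 < N1) (h2 : 0 < Na) :
    M.x1 a N1 Na ∈ M.toSPEF.S :=
  M.mem_S_of_mem_Icc (Set.Ioo_subset_Icc_self (M.x1_mem_Ioo ha h1 h2))

lemma d_x1_pos {a : Fin K} (ha : a ≠ 0) {N1 Na : ℝ} (h1 : 0 < N1) (h2 : 0 < Na) :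
    0 < M.d (M.μ a) (M.x1 a N1 Na) :=
  M.d_pos_of_lt (M.μ_mem a) (M.x1_mem_S ha h1 h2) (M.x1_mem_Ioo ha h1 h2).1

lemma mul_d_le_W {a : Fin K} (ha : a ≠ 0) {N1 Na : ℝ} (h1 : 0 < N1) (h2 : 0 < Na) :
    Na * M.d (M.μ a) (M.x1 a N1 Na) ≤ M.W a N1 Na :=
  le_add_of_nonneg_left <|
    mul_nonneg h1.le (M.d_nonneg (M.μ_mem 0) (M.x1_mem_S ha h1 h2))

/-- The index is the minimum over `y` of `N₁ d(μ₁, y) + N_a d(μ_a, y)`, which is attained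
at `x_{1,a}`. -/
lemma W_add_mul_d (a : Fin K) {N1 Na : ℝ} (h : N1 + Na ≠ 0) (y : ℝ) :
    M.W a N1 Na + (N1 + Na) * M.d (M.x1 a N1 Na) y =
      N1 * M.d (M.μ 0) y + Na * M.d (M.μ a) y := by
  have hx : (N1 + Na) * M.x1 a N1 Na = N1 * M.μ 0 + Na * M.μ a := mul_div_cancel₀ _ h
  simp only [W, d, SPEF.d]
  linear_combination
    (M.θof (M.x1 a N1 Na) - M.θof y) * hx

lemma W_le {a : Fin K} (ha : a ≠ 0) {N1 Na : ℝ} (h1 : 0 < N1) (h2 : 0 < Na) :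
    M.W a N1 Na ≤ Na * M.d (M.μ a) (M.μ 0) := by
  have h := M.W_add_mul_d a (add_pos h1 h2).ne' (M.μ 0)
  have h0 : M.d (M.μ 0) (M.μ 0) = 0 := M.d_self _
  have := mul_nonneg (add_pos h1 h2).le (M.d_nonneg (M.x1_mem_S ha h1 h2) (M.μ_mem 0))
  rw [h0, mul_zero, zero_add] at h
  rw [← h]
  exact le_add_of_nonneg_right this

lemma hasDerivAt_W {a : Fin K} (ha : a ≠ 0) {n1 na : ℝ → ℝ} {n1' na' t : ℝ}
    (h1 : 0 < n1 t) (h2 : 0 < na t) (hn1 : HasDerivAt n1 n1' t) (hna : HasDerivAt na na' t) :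
    HasDerivAt (fun s => M.W a (n1 s) (na s))
      (n1' * M.d (M.μ 0) (M.x1 a (n1 t) (na t)) +
        na' * M.d (M.μ a) (M.x1 a (n1 t) (na t))) t := by
  have hne := (add_pos h1 h2).ne'
  obtain ⟨r, -, hd⟩ := M.exists_hasDerivAt_d (M.x1_mem_S ha h1 h2)
  obtain ⟨x', hx⟩ : ∃ x', HasDerivAt (fun s => M.x1 a (n1 s) (na s)) x' t :=
    ⟨_, ((hn1.mul_const _).add (hna.mul_const _)).div (hn1.add hna) hne⟩
  have h := (hn1.mul ((hd (M.μ 0)).comp t hx)).add (hna.mul ((hd (M.μ a)).comp t hx))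
  refine h.congr_deriv ?_
  have hx1 : (n1 t + na t) * M.x1 a (n1 t) (na t) = n1 t * M.μ 0 + na t * M.μ a :=
    mul_div_cancel₀ _ hne
  simp only [Function.comp_apply, d]
  linear_combination r * x' * hx1

/-- A lower bound for `d(μ_a, x_{1,a})` that holds uniformly over allocations giving arm `1`
a proportion `β` of the total. -/
lemma exists_le_d_x1 {β : ℝ} (hβ : β ∈ Set.Ioo (0 : ℝ) 1) :
    ∃ δ, 0 < δ ∧ ∀ a ≠ 0, ∀ N Na : ℝ, 0 < N → 0 < Na → Na ≤ (1 - β) * N →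
      δ ≤ M.d (M.μ a) (M.x1 a (β * N) Na) := by
  obtain ⟨h0, h1⟩ := hβ
  have hβ' : 0 < 1 - β := sub_pos.2 h1
  have hpos : ∀ a : Fin K, 0 < if a = 0 then 1 else M.d (M.μ a) (M.x1 a β (1 - β)) := by
    intro a
    split_ifs with ha
    · exact one_pos
    · exact M.d_x1_pos ha h0 hβ'
  obtain ⟨a₀, ha₀⟩ := Finite.exists_min
    fun a : Fin K => if a = 0 then 1 else M.d (M.μ a) (M.x1 a β (1 - β))
  refine ⟨_, hpos a₀, fun a ha N Na hN hNa hle => (ha₀ a).trans ?_⟩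
  rw [if_neg ha]
  have hβN := mul_pos h0 hN
  have hμ := M.μ_best a ha
  refine (M.strictMonoOn_d (M.μ a)).monotoneOn
    ⟨M.x1_mem_S ha h0 hβ', (M.x1_mem_Ioo ha h0 hβ').1.le⟩
    ⟨M.x1_mem_S ha hβN hNa, (M.x1_mem_Ioo ha hβN hNa).1.le⟩ ?_
  rw [x1, x1, add_sub_cancel, div_one, le_div_iff₀ (by positivity)]
  nlinarith [mul_nonneg (mul_nonneg h0.le (sub_nonneg.2 hle)) (sub_pos.2 hμ).le]

end Bandit

/-- The sum of the rates over `B` and the equality of the index derivatives over `B` determine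
the common index derivative. -/
lemma sum_rates_div_eq {ι : Type*} {B : Finset ι} (hB : B.Nonempty) {D n n' : ι → ℝ}
    {N I I' : ℝ} (hD : ∀ a ∈ B, 0 < D a) (h : ∀ a ∈ B, I' = I / N + D a * (n' a - n a / N)) :
    I' = (∑ a ∈ B, n' a - (∑ a ∈ B, n a) / N) * (∑ a ∈ B, (D a)⁻¹)⁻¹ + I / N := by
  have hS : 0 < ∑ a ∈ B, (D a)⁻¹ := Finset.sum_pos (fun a ha => inv_pos.2 (hD a ha)) hB
  have key : (I' - I / N) * ∑ a ∈ B, (D a)⁻¹ = ∑ a ∈ B, n' a - (∑ a ∈ B, n a) / N := by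
    rw [Finset.mul_sum, Finset.sum_div, ← Finset.sum_sub_distrib]
    refine Finset.sum_congr rfl fun a ha => ?_
    rw [← div_eq_mul_inv, div_eq_iff (hD a ha).ne', h a ha]
    ring
  rw [← key, mul_assoc, mul_inv_cancel₀ hS.ne']
  ring

/-- The weighted combination of the harmonic aggregate `(∑ D⁻¹)⁻¹` and of a common upper bound
`w` of the products `p a * D a` is bounded below in terms of a lower bound `δ` of `D`. -/
lemma div_card_mul_le {ι : Type*} {B : Finset ι} (hB : B.Nonempty) {D p : ι → ℝ}
    {δ m w : ℝ} (hδ : 0 < δ) (hD : ∀ a ∈ B, δ ≤ D a) (hp : ∀ a ∈ B, 0 ≤ p a)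
    (hm : ∑ a ∈ B, p a ≤ m) (hw : ∀ a ∈ B, p a * D a ≤ w) :
    δ / B.card * m ≤ (m - ∑ a ∈ B, p a) * (∑ a ∈ B, (D a)⁻¹)⁻¹ + w := by
  have hc : (0 : ℝ) < B.card := by exact_mod_cast hB.card_pos
  have h1 : δ / B.card ≤ (∑ a ∈ B, (D a)⁻¹)⁻¹ := by
    rw [← inv_div]
    refine inv_anti₀ (Finset.sum_pos (fun a ha => inv_pos.2 (hδ.trans_le (hD a ha))) hB) ?_
    calc ∑ a ∈ B, (D a)⁻¹ ≤ ∑ _a ∈ B, δ⁻¹ :=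
          Finset.sum_le_sum fun a ha => inv_anti₀ hδ (hD a ha)
      _ = B.card / δ := by rw [Finset.sum_const, nsmul_eq_mul, div_eq_mul_inv]
  have h2 : δ / B.card * ∑ a ∈ B, p a ≤ w := by
    rw [div_mul_eq_mul_div, div_le_iff₀ hc, Finset.mul_sum]
    calc ∑ a ∈ B, δ * p a ≤ ∑ _a ∈ B, w := Finset.sum_le_sum fun a ha =>
          (by nlinarith [hD a ha, hp a ha] : δ * p a ≤ p a * D a).trans (hw a ha)
      _ = w * B.card := by rw [Finset.sum_const, nsmul_eq_mul, mul_comm]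
  nlinarith [mul_le_mul_of_nonneg_left h1 (sub_nonneg.2 hm)]

lemma Bandit.sum_univ_eq {K : ℕ} [NeZero K] {B : Finset (Fin K)} (hB : B ⊆ alt K)
    (f : Fin K → ℝ) :
    ∑ a, f a = f 0 + (∑ a ∈ alt K \ B, f a + ∑ a ∈ B, f a) := by
  rw [Finset.sum_sdiff hB, alt, Finset.filter_ne', Finset.add_sum_erase _ _ (Finset.mem_univ 0)]

/-- Proposition B.10, fluid ODEs for β-EB-TCB: along a β-fluid
trajectory keeping `N₁ = β·N` and the indexes in `B` equal, the allocation rates and the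
index derivative are given by the stated formulas; the index derivative is bounded below
by a constant `c > 0` depending only on `μ` and `β`, while the indexes of the arms off
`B` stay bounded by `N_a⁰·d(μ_a, μ_1)`. -/
theorem statement_17 {K : ℕ} [NeZero K] (M : Bandit K)
    (β : ℝ) (hβ : β ∈ Set.Ioo (0 : ℝ) 1) :
    ∃ c : ℝ, 0 < c ∧
      ∀ B : Finset (Fin K), B.Nonempty → B ⊆ alt K →
      ∀ J : Set ℝ, IsOpen J → Set.OrdConnected J → J ⊆ Set.Ioi 0 →
      ∀ (Nf Nf' : ℝ → Fin K → ℝ) (IB : ℝ → ℝ),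
        (∀ N ∈ J, ∀ a, 0 < Nf N a) →
        (∀ N ∈ J, ∀ a, HasDerivAt (fun t => Nf t a) (Nf' N a) N) →
        (∀ N ∈ J, ∑ a, Nf N a = N) →
        (∀ N ∈ J, Nf N 0 = β * N) →
        (∀ a ∈ alt K \ B, ∀ N ∈ J, ∀ N' ∈ J, Nf N a = Nf N' a) →
        (∀ N ∈ J, ∀ a ∈ B, M.W a (Nf N 0) (Nf N a) = IB N) →
        ∀ N ∈ J,
          -- (1) allocation rates
          Nf' N 0 = β ∧
          (∀ b ∈ B, Nf' N b =
            (((1 - β) * N - ∑ a ∈ B, Nf N a) * M.dB B (Nf N) +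
                Nf N b * M.d (M.μ b) (M.x1 b (Nf N 0) (Nf N b))) /
              (N * M.d (M.μ b) (M.x1 b (Nf N 0) (Nf N b)))) ∧
          -- (2) index ODE
          HasDerivAt IB
            ((1 - β - (∑ a ∈ B, Nf N a) / N) * M.dB B (Nf N) + IB N / N) N ∧
          -- (3) uniform lower bound on the index derivative, and bounded indexes off `B`
          c ≤ (1 - β - (∑ a ∈ B, Nf N a) / N) * M.dB B (Nf N) + IB N / N ∧
          (∀ a ∈ alt K \ B,
            M.W a (Nf N 0) (Nf N a) ≤ Nf N a * M.d (M.μ a) (M.μ 0)) := by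
  obtain ⟨δ, hδ, hδle⟩ := M.exists_le_d_x1 hβ
  have hβ' : 0 < 1 - β := sub_pos.2 hβ.2
  have hK : (0 : ℝ) < K := by exact_mod_cast NeZero.pos K
  refine ⟨δ / K * (1 - β), by positivity, ?_⟩
  intro B hB hBalt J hJ _ hJpos Nf Nf' IB hpos hderiv hsum hzero hconst hW N hN
  have hN0 : 0 < N := hJpos hN
  have hne : ∀ a ∈ alt K, a ≠ 0 := fun a ha => (Finset.mem_filter.1 ha).2
  have hJN : J ∈ nhds N := hJ.mem_nhds hN
  have hrate0 : Nf' N 0 = β := by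
    refine (hderiv N hN 0).unique
      ((((hasDerivAt_id N).const_mul β).congr_of_eventuallyEq ?_).congr_deriv (mul_one β))
    filter_upwards [hJN] with t ht using hzero t ht
  have hrate_off : ∀ a ∈ alt K \ B, Nf' N a = 0 := fun a ha => by
    refine (hderiv N hN a).unique ((hasDerivAt_const N (Nf N a)).congr_of_eventuallyEq ?_)
    filter_upwards [hJN] with t ht using hconst a ha t ht N hN
  have hrate_sum : ∑ a, Nf' N a = 1 := by
    refine (HasDerivAt.fun_sum fun a _ => hderiv N hN a).unique
      ((hasDerivAt_id N).congr_of_eventuallyEq ?_)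
    filter_upwards [hJN] with t ht using hsum t ht
  have hrateB : ∑ a ∈ B, Nf' N a = 1 - β := by
    rw [sum_univ_eq hBalt, hrate0, Finset.sum_eq_zero hrate_off] at hrate_sum
    linarith
  have hNB : ∑ a ∈ B, Nf N a ≤ (1 - β) * N := by
    have h := hsum N hN
    rw [sum_univ_eq hBalt, hzero N hN] at h
    have := Finset.sum_nonneg fun a (_ : a ∈ alt K \ B) => (hpos N hN a).le
    linarith
  have hD : ∀ a ∈ B, 0 < M.d (M.μ a) (M.x1 a (Nf N 0) (Nf N a)) := fun a ha =>
    M.d_x1_pos (hne a (hBalt ha)) (hpos N hN 0) (hpos N hN a)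
  have hIB : ∀ a ∈ B, HasDerivAt IB
      (IB N / N + M.d (M.μ a) (M.x1 a (Nf N 0) (Nf N a)) * (Nf' N a - Nf N a / N)) N := by
    intro a ha
    have h := M.hasDerivAt_W (hne a (hBalt ha)) (hpos N hN 0) (hpos N hN a)
      (hderiv N hN 0) (hderiv N hN a)
    refine (h.congr_of_eventuallyEq ?_).congr_deriv ?_
    · filter_upwards [hJN] with t ht using (hW t ht a ha).symm
    · rw [hrate0, ← hW N hN a ha, W]
      nth_rw 3 [hzero N hN]
      field_simp
      ring
  have hode : ∀ a ∈ B,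
      (1 - β - (∑ a ∈ B, Nf N a) / N) * M.dB B (Nf N) + IB N / N =
        IB N / N + M.d (M.μ a) (M.x1 a (Nf N 0) (Nf N a)) * (Nf' N a - Nf N a / N) := by
    intro a ha
    rw [dB, ← hrateB]
    exact (sum_rates_div_eq hB hD fun b hb => (hIB a ha).unique (hIB b hb)).symm
  refine ⟨hrate0, fun b hb => ?_, ?_, ?_, fun a ha => ?_⟩
  · have hb' := hD b hb
    have h := hode b hb
    rw [eq_div_iff (by positivity)]
    field_simp at h
    linarith
  · obtain ⟨a, ha⟩ := hB
    exact (hIB a ha).congr_deriv (hode a ha).symm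
  · have hcard : (B.card : ℝ) ≤ K := by
      exact_mod_cast (Finset.card_le_univ B).trans_eq (Fintype.card_fin K)
    have hcard0 : (0 : ℝ) < B.card := by exact_mod_cast hB.card_pos
    calc δ / K * (1 - β) ≤ δ / B.card * (1 - β) := by gcongr
      _ ≤ _ := by
        rw [Finset.sum_div]
        refine div_card_mul_le hB hδ (fun a ha => ?_)
          (fun a _ => div_nonneg (hpos N hN a).le hN0.le) ?_ fun a ha => ?_
        · rw [hzero N hN]
          exact hδle a (hne a (hBalt ha)) N _ hN0 (hpos N hN a)
            ((Finset.single_le_sum (fun b _ => (hpos N hN b).le) ha).trans hNB)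
        · rwa [← Finset.sum_div, div_le_iff₀ hN0]
        · rw [div_mul_eq_mul_div, ← hW N hN a ha]
          gcongr
          exact M.mul_d_le_W (hne a (hBalt ha)) (hpos N hN 0) (hpos N hN a)
  · exact M.W_le (hne a (Finset.mem_sdiff.1 ha).1) (hpos N hN 0) (hpos N hN a)
end

section
/- Under the exploration rule, there exists a constant M > 0, depending only on K and α, such that: (1) every epoch of exploration beginning at an iteration N ≥ M has length at most K, and during that epoch each arm is pulled at most once; (2) if an epoch of exploration begins at iteration N ≥ M and the next epoch of exploration begins at iteration N + T, then T ≥ (1/α)·(N−1)^{1−α} − 1 (so consecutive epochs are separated by Θ(N^{1−α}) iterations). -/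
/-- Number of pulls of arm `a` in the first `N` iterations (iterations are numbered
starting from `1`). -/
def pulls {K : ℕ} (A : ℕ → Fin K) (a : Fin K) (N : ℕ) : ℕ :=
  ((Finset.Icc 1 N).filter fun n => A n = a).card

/-- Iteration `N ≥ 1` is an exploration if the least-sampled arm has fewer than `N^α`
pulls, i.e. `min_a Ñ_a(N−1) < N^α`. -/
def isExplo {K : ℕ} (α : ℝ) (A : ℕ → Fin K) (N : ℕ) : Prop :=
  1 ≤ N ∧ ∃ a : Fin K, (pulls A a (N - 1) : ℝ) < (N : ℝ) ^ α

/-- The exploration rule: at every exploration iteration, a least-sampled arm is pulled. -/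
def ExploRule {K : ℕ} (α : ℝ) (A : ℕ → Fin K) : Prop :=
  ∀ N : ℕ, isExplo α A N → ∀ b : Fin K, pulls A (A N) (N - 1) ≤ pulls A b (N - 1)

theorem pulls_mono {K : ℕ} (A : ℕ → Fin K) (a : Fin K) : Monotone (pulls A a) := fun _ _ h =>
  Finset.card_le_card (Finset.filter_subset_filter _ (Finset.Icc_subset_Icc_right h))

theorem pulls_self {K : ℕ} (A : ℕ → Fin K) {n : ℕ} (hn : 1 ≤ n) :
    pulls A (A n) n = pulls A (A n) (n - 1) + 1 := by
  obtain ⟨k, rfl⟩ : ∃ k, n = k + 1 := ⟨n - 1, by omega⟩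
  unfold pulls
  rw [← Finset.insert_Icc_right_eq_Icc_add_one (by omega), Finset.filter_insert, if_pos rfl,
    Finset.card_insert_of_notMem (by simp)]
  simp

/-- At an exploration iteration, the pulled arm itself has fewer than `N ^ α` pulls. -/
theorem ExploRule.pulls_lt {K : ℕ} {α : ℝ} {A : ℕ → Fin K} (hA : ExploRule α A) {N : ℕ}
    (hN : isExplo α A N) : (pulls A (A N) (N - 1) : ℝ) < (N : ℝ) ^ α := by
  obtain ⟨a, ha⟩ := hN.2
  exact lt_of_le_of_lt (by exact_mod_cast hA N hN a) ha

/-- Right after a non-exploration iteration, every arm has many pulls. -/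
theorem le_pulls_of_not_isExplo {K : ℕ} {α : ℝ} {A : ℕ → Fin K} {N : ℕ} (hN : 2 ≤ N)
    (h : ¬ isExplo α A (N - 1)) (a : Fin K) : ((N : ℝ) - 1) ^ α ≤ pulls A a (N - 1) := by
  have h' : ((N - 1 : ℕ) : ℝ) ^ α ≤ pulls A a (N - 1 - 1) := by
    by_contra! hlt
    exact h ⟨by omega, a, hlt⟩
  rw [Nat.cast_sub (by omega), Nat.cast_one] at h'
  exact h'.trans (by exact_mod_cast pulls_mono A a (Nat.sub_le _ 1))

/-- The tangent line of the concave function `x ↦ x ^ α` lies above its graph. -/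
theorem rpow_add_le_tangent {α x t : ℝ} (h₀ : 0 ≤ α) (h₁ : α ≤ 1) (hx : 0 < x) (ht : 0 ≤ t) :
    (x + t) ^ α ≤ x ^ α + α * t / x ^ (1 - α) := by
  have hb : (1 + t / x) ^ α ≤ 1 + α * (t / x) :=
    rpow_one_add_le_one_add_mul_self (by linarith [div_nonneg ht hx.le]) h₀ h₁
  have hmul : x ^ α * x ^ (1 - α) = x := by
    rw [← Real.rpow_add hx, add_sub_cancel, Real.rpow_one]
  have hp : 0 < x ^ (1 - α) := Real.rpow_pos_of_pos hx _
  have hq : 0 < x ^ α := Real.rpow_pos_of_pos hx _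
  calc (x + t) ^ α = x ^ α * (1 + t / x) ^ α := by
        rw [← Real.mul_rpow hx.le (by positivity)]
        congr 1
        field_simp
    _ ≤ x ^ α * (1 + α * (t / x)) := by gcongr
    _ = x ^ α + α * t / x ^ (1 - α) := by
        rw [mul_add, mul_one]
        congr 1
        rw [eq_div_iff hp.ne']
        calc x ^ α * (α * (t / x)) * x ^ (1 - α) = x ^ α * x ^ (1 - α) * (α * (t / x)) := by ring
          _ = α * t := by rw [hmul]; field_simp

/-- Proposition C.1 (3)–(4): beyond a constant time `M` depending only
on `K` and `α`, every epoch of exploration has length at most `K` with each arm pulled at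
most once, and consecutive epochs of exploration are separated by at least
`(1/α)·(N−1)^{1−α} − 1` iterations. -/
theorem statement_19 (K : ℕ) (hK : 2 ≤ K) (α : ℝ) (hα : α ∈ Set.Ioo (0 : ℝ) 1) :
    ∃ M : ℝ, 0 < M ∧
      -- (1) short epochs, each arm pulled at most once
      (∀ A : ℕ → Fin K, ExploRule α A →
        ∀ N₁ N₂ : ℕ, M ≤ (N₁ : ℝ) → N₁ ≤ N₂ →
          (∀ n ∈ Finset.Icc N₁ N₂, isExplo α A n) →
          (N₁ = 1 ∨ ¬ isExplo α A (N₁ - 1)) →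
          ((N₂ : ℝ) - N₁ + 1 ≤ (K : ℝ) ∧
            ∀ a : Fin K, ((Finset.Icc N₁ N₂).filter fun n => A n = a).card ≤ 1)) ∧
      -- (2) separation between consecutive epochs
      (∀ A : ℕ → Fin K, ExploRule α A →
        ∀ N T : ℕ, M ≤ (N : ℝ) → 1 ≤ T →
          isExplo α A N → ¬ isExplo α A (N - 1) →
          isExplo α A (N + T) → ¬ isExplo α A (N + T - 1) →
          (1 / α) * ((N : ℝ) - 1) ^ (1 - α) - 1 ≤ (T : ℝ)) := by
  obtain ⟨h₀, h₁⟩ := hα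
  refine ⟨((K : ℝ) + 1) ^ (1 / (1 - α)) + 1, by positivity, ?_, ?_⟩
  · intro A hA N₁ N₂ hM h12 hex hstart
    have hpos : (0 : ℝ) < ((K : ℝ) + 1) ^ (1 / (1 - α)) := by positivity
    have hN2 : 2 ≤ N₁ := by
      have : (1 : ℝ) < N₁ := by linarith
      exact_mod_cast this
    have hstart' : ¬ isExplo α A (N₁ - 1) := hstart.resolve_left (by omega)
    have hx : (0 : ℝ) < (N₁ : ℝ) - 1 := by linarith
    have hpow : (K : ℝ) + 1 ≤ ((N₁ : ℝ) - 1) ^ (1 - α) := by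
      calc (K : ℝ) + 1 = (((K : ℝ) + 1) ^ (1 / (1 - α))) ^ (1 - α) := by
            rw [← Real.rpow_mul (by positivity), one_div_mul_cancel (by linarith), Real.rpow_one]
        _ ≤ _ := Real.rpow_le_rpow hpos.le (by linarith) (by linarith)
    have hgrow : ((N₁ : ℝ) + K) ^ α ≤ ((N₁ : ℝ) - 1) ^ α + 1 := by
      have htan := rpow_add_le_tangent h₀.le h₁.le hx (t := (K : ℝ) + 1) (by positivity)
      rw [show (N₁ : ℝ) - 1 + (K + 1) = N₁ + K by ring] at htan
      have : α * ((K : ℝ) + 1) / ((N₁ : ℝ) - 1) ^ (1 - α) ≤ 1 := by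
        rw [div_le_one (by positivity)]
        nlinarith
      linarith
    set m := pulls A (A N₁) (N₁ - 1)
    have hmin := hA N₁ (hex N₁ (by simp [h12]))
    have hmlow : ((N₁ : ℝ) - 1) ^ α ≤ m := le_pulls_of_not_isExplo hN2 hstart' _
    have hle : ∀ n, N₁ ≤ n → n ≤ N₂ → n ≤ N₁ + K → pulls A (A n) (n - 1) ≤ m := by
      intro n hn1 hn2 hnK
      have hlt := hA.pulls_lt (hex n (Finset.mem_Icc.2 ⟨hn1, hn2⟩))
      have hnK' : (n : ℝ) ≤ N₁ + K := by exact_mod_cast hnK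
      have := Real.rpow_le_rpow (Nat.cast_nonneg n) hnK' h₀.le
      have : (pulls A (A n) (n - 1) : ℝ) < m + 1 := by linarith
      exact Nat.lt_succ_iff.1 (by exact_mod_cast this)
    have hne : ∀ n n', N₁ ≤ n → n < n' → n' ≤ N₂ → n' ≤ N₁ + K → A n ≠ A n' := by
      intro n n' hn hlt hn2 hnK heq
      have hup := hle n' (by omega) hn2 hnK
      have hself := pulls_self A (n := n) (by omega)
      have hstep := pulls_mono A (A n) (show n ≤ n' - 1 by omega)
      have hbase := pulls_mono A (A n) (show N₁ - 1 ≤ n - 1 by omega)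
      have hlow := hmin (A n)
      rw [← heq] at hup
      omega
    have hlen : N₂ + 1 ≤ N₁ + K := by
      by_contra! hlong
      have hinj : Set.InjOn A (Finset.Icc N₁ (N₁ + K) : Finset ℕ) := by
        intro n hn n' hn' heq
        simp only [Finset.coe_Icc, Set.mem_Icc] at hn hn'
        by_contra hnn
        rcases lt_or_gt_of_ne hnn with h | h
        · exact hne n n' hn.1 h (by omega) hn'.2 heq
        · exact hne n' n hn'.1 h (by omega) hn.2 heq.symm
      have hcard := Finset.card_le_card_of_injOn (t := Finset.univ) A (by simp) hinj
      simp only [Nat.card_Icc, Finset.card_univ, Fintype.card_fin] at hcard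
      omega
    refine ⟨?_, fun a => Finset.card_le_one.2 ?_⟩
    · have : (N₂ : ℝ) + 1 ≤ N₁ + K := by exact_mod_cast hlen
      linarith
    · intro n hn n' hn'
      simp only [Finset.mem_filter, Finset.mem_Icc] at hn hn'
      by_contra hnn
      rcases lt_or_gt_of_ne hnn with h | h
      · exact hne n n' hn.1.1 h hn'.1.2 (by omega) (hn.2.trans hn'.2.symm)
      · exact hne n' n hn'.1.1 h hn.1.2 (by omega) (hn'.2.trans hn.2.symm)
  · intro A hA N T hM hT hN hN' hNT hNT'
    have hpos : (0 : ℝ) < ((K : ℝ) + 1) ^ (1 / (1 - α)) := by positivity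
    have hx : (0 : ℝ) < (N : ℝ) - 1 := by linarith
    have hN2 : 2 ≤ N := by
      have : (1 : ℝ) < N := by linarith
      exact_mod_cast this
    have hT2 : 2 ≤ T := by
      by_contra! h
      obtain rfl : T = 1 := by omega
      exact hNT' hN
    have hlow := le_pulls_of_not_isExplo hN2 hN' (A N)
    have hupp := hA.pulls_lt hN
    have hlow' := le_pulls_of_not_isExplo (by omega) hNT' (A (N + T))
    have hupp' := hA.pulls_lt hNT
    push_cast at hlow' hupp'
    have hT' : (2 : ℝ) ≤ T := by exact_mod_cast hT2
    have hmon : (N : ℝ) ^ α ≤ ((N : ℝ) + T - 1) ^ α :=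
      Real.rpow_le_rpow (Nat.cast_nonneg N) (by linarith) h₀.le
    have hsucc : (pulls A (A N) (N - 1) : ℝ) + 1 ≤ pulls A (A (N + T)) (N + T - 1) := by
      have : (pulls A (A N) (N - 1) : ℝ) < pulls A (A (N + T)) (N + T - 1) := by linarith
      exact_mod_cast this
    have htan := rpow_add_le_tangent h₀.le h₁.le hx (t := (T : ℝ) + 1) (by positivity)
    rw [show (N : ℝ) - 1 + (T + 1) = N + T by ring] at htan
    have hfrac : 1 ≤ α * ((T : ℝ) + 1) / ((N : ℝ) - 1) ^ (1 - α) := by linarith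
    rw [one_le_div (by positivity)] at hfrac
    rw [sub_le_iff_le_add, one_div, inv_mul_le_iff₀ h₀]
    exact hfrac
end
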